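/- arXiv:2402.17576 — 10 statements merged into one kernel-verified Lean document; each statement's English description precedes it below -/
import Mathlib

section
/- Let c be a real number with |c| < 1 and set σ = √(1−c²). Define v(x,t) = 2(1−c²)/(cosh(σ(x−ct)) − c) and η(x,t) = c·v(x,t) − (1/2)·v(x,t)². Then the pair (η, v) is a smooth solution on ℝ×ℝ of the good Kaup–Broer–Kupershmidt system: ∂_t η + ∂_x v + ∂_x(η v) − ∂_x³ v = 0 and ∂_t v + ∂_x η + v ∂_x v = 0. -/
/-- The explicit solitary wave `(η, v)` of speed `c`, `|c| < 1`, is a smooth solution of the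
good Kaup–Broer–Kupershmidt system
`∂_t η + ∂_x v + ∂_x(η v) − ∂_x³ v = 0`, `∂_t v + ∂_x η + v ∂_x v = 0`. -/
theorem stmt_0 (c : ℝ) (hc : |c| < 1)
    (v η : ℝ → ℝ → ℝ)
    (hv : ∀ x t, v x t = 2 * (1 - c ^ 2) /
      (Real.cosh (Real.sqrt (1 - c ^ 2) * (x - c * t)) - c))
    (hη : ∀ x t, η x t = c * v x t - (1 / 2) * (v x t) ^ 2) :
    ContDiff ℝ (⊤ : ℕ∞) (fun p : ℝ × ℝ => η p.1 p.2) ∧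
    ContDiff ℝ (⊤ : ℕ∞) (fun p : ℝ × ℝ => v p.1 p.2) ∧
    (∀ x t : ℝ,
      deriv (fun s => η x s) t + deriv (fun y => v y t) x
        + deriv (fun y => η y t * v y t) x - iteratedDeriv 3 (fun y => v y t) x = 0) ∧
    (∀ x t : ℝ,
      deriv (fun s => v x s) t + deriv (fun y => η y t) x
        + v x t * deriv (fun y => v y t) x = 0) := by
  have hc1 : c < 1 := (abs_lt.mp hc).2
  have hc0 : -1 < c := (abs_lt.mp hc).1
  have ha : 0 ≤ 1 - c ^ 2 := by nlinarith
  have hσ : Real.sqrt (1 - c ^ 2) ^ 2 = 1 - c ^ 2 := Real.sq_sqrt ha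
  generalize Real.sqrt (1 - c ^ 2) = σ at hv hσ
  have hD : ∀ z : ℝ, Real.cosh z - c ≠ 0 := fun z => by
    have := Real.one_le_cosh z
    linarith
  have hvs : ContDiff ℝ (⊤ : ℕ∞) (fun p : ℝ × ℝ => v p.1 p.2) := by
    simp only [hv]
    refine ContDiff.div contDiff_const ?_ (fun p => hD _)
    exact (Real.contDiff_cosh.comp (by fun_prop)).sub contDiff_const
  have hηs : ContDiff ℝ (⊤ : ℕ∞) (fun p : ℝ × ℝ => η p.1 p.2) := by
    simp only [hη]
    exact (contDiff_const.mul hvs).sub (contDiff_const.mul (hvs.pow 2))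
  -- first derivative of the profile
  obtain ⟨w, hw⟩ : ∃ w : ℝ → ℝ → ℝ, ∀ x t, w x t = -(2 * (1 - c ^ 2)) * σ *
      Real.sinh (σ * (x - c * t)) / (Real.cosh (σ * (x - c * t)) - c) ^ 2 :=
    ⟨_, fun _ _ => rfl⟩
  have hvx : ∀ x t, HasDerivAt (fun y => v y t) (w x t) x := by
    intro x t
    simp only [hv, hw]
    have h1 : HasDerivAt (fun y : ℝ => σ * (y - c * t)) σ x := by
      simpa using ((hasDerivAt_id x).sub_const (c * t)).const_mul σ
    have h2 := (hasDerivAt_const x (2 * (1 - c ^ 2))).div (h1.cosh.sub_const c) (hD _)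
    refine h2.congr_deriv ?_
    ring
  have hvt : ∀ x t, HasDerivAt (fun s => v x s) (-c * w x t) t := by
    intro x t
    simp only [hv, hw]
    have h1 : HasDerivAt (fun s : ℝ => σ * (x - c * s)) (-c * σ) t := by
      refine ((((hasDerivAt_id t).const_mul c).const_sub x).const_mul σ).congr_deriv ?_
      ring
    have h2 := (hasDerivAt_const t (2 * (1 - c ^ 2))).div (h1.cosh.sub_const c) (hD _)
    refine h2.congr_deriv ?_
    ring
  have hwx : ∀ x t, HasDerivAt (fun y => w y t)
      ((1 - c ^ 2) * v x t + 3 * c / 2 * v x t ^ 2 - v x t ^ 3 / 2) x := by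
    intro x t
    simp only [hv, hw]
    have h1 : HasDerivAt (fun y : ℝ => σ * (y - c * t)) σ x := by
      simpa using ((hasDerivAt_id x).sub_const (c * t)).const_mul σ
    have h2 := (h1.sinh.const_mul (-(2 * (1 - c ^ 2)) * σ)).div
      ((h1.cosh.sub_const c).pow 2) (pow_ne_zero 2 (hD _))
    refine h2.congr_deriv ?_
    have hS := Real.sinh_sq (σ * (x - c * t))
    have hd := hD (σ * (x - c * t))
    simp only [Pi.pow_apply]
    generalize Real.sinh (σ * (x - c * t)) = S at *
    generalize Real.cosh (σ * (x - c * t)) = C at *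
    obtain ⟨D, rfl⟩ : ∃ D, C = D + c := ⟨C - c, by ring⟩
    simp only [add_sub_cancel_right] at *
    have e : ∀ A : ℝ, (A * σ * ((D + c) * σ) * D ^ 2 - A * σ * S * (2 * D * (S * σ))) / (D^2)^2
        = A * σ ^ 2 * ((D + c) * D - 2 * S ^ 2) / D ^ 3 := by
      intro A
      field_simp
    have e2 := e (-(2 * (1 - c ^ 2)))
    rw [hσ, hS] at e2
    norm_num
    norm_num at e2
    rw [e2]
    field_simp
    ring
  have hηx : ∀ x t, HasDerivAt (fun y => η y t) (c * w x t - v x t * w x t) x := by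
    intro x t
    simp only [hη]
    refine (((hvx x t).const_mul c).sub (((hvx x t).pow 2).const_mul (1/2))).congr_deriv ?_
    norm_num
    ring
  have hηt : ∀ x t, HasDerivAt (fun s => η x s) (-c * (c * w x t - v x t * w x t)) t := by
    intro x t
    simp only [hη]
    refine (((hvt x t).const_mul c).sub (((hvt x t).pow 2).const_mul (1/2))).congr_deriv ?_
    norm_num
    ring
  have h3 : ∀ x t, iteratedDeriv 3 (fun y => v y t) x =
      ((1 - c ^ 2) + 3 * c * v x t - 3 / 2 * v x t ^ 2) * w x t := by
    intro x t
    have d1 : deriv (fun y => v y t) = fun y => w y t := funext fun y => (hvx y t).deriv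
    have d2 : deriv (fun y => w y t) = fun y =>
        (1 - c ^ 2) * v y t + 3 * c / 2 * v y t ^ 2 - v y t ^ 3 / 2 :=
      funext fun y => (hwx y t).deriv
    rw [iteratedDeriv_succ', iteratedDeriv_succ', iteratedDeriv_one, d1, d2]
    have h := ((((hvx x t).const_mul (1 - c ^ 2)).add
      (((hvx x t).pow 2).const_mul (3 * c / 2))).sub (((hvx x t).pow 3).div_const 2))
    refine (h.congr_deriv ?_).deriv
    norm_num
    ring
  refine ⟨hηs, hvs, fun x t => ?_, fun x t => ?_⟩
  · have hm : deriv (fun y => η y t * v y t) x = _ := ((hηx x t).mul (hvx x t)).deriv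
    rw [(hηt x t).deriv, (hvx x t).deriv, hm, h3, hη]
    ring
  · rw [(hvt x t).deriv, (hvx x t).deriv, (hηx x t).deriv]
    ring
end

section
/- Let c ∈ ℝ and let φ : ℝ → ℝ be a C² solution of the equation −φ'' + (1−c²) φ + (3/2) c φ² − (1/2) φ³ = 0 on ℝ such that φ(ξ) → 0 and φ'(ξ) → 0 as ξ → +∞. Then φ satisfies the first-integral identity (φ'(ξ))² = (1−c²) φ(ξ)² + c φ(ξ)³ − (1/4) φ(ξ)⁴ for all ξ ∈ ℝ. Consequently, if |c| > 1, then φ ≡ 0; in other words, for |c| > 1 there is no nontrivial solitary-wave profile. -/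
/-- A `C²` solution of the profile equation `−φ'' + (1−c²)φ + (3/2)cφ² − (1/2)φ³ = 0`with
`φ, φ' → 0` at `+∞` satisfies the first integral
`(φ')² = (1−c²)φ² + cφ³ − (1/4)φ⁴`; consequently, if `|c| > 1` then `φ ≡ 0`. -/
theorem stmt_3 (c : ℝ) (φ : ℝ → ℝ) (hφ : ContDiff ℝ 2 φ)
    (heq : ∀ ξ : ℝ, -deriv (deriv φ) ξ + (1 - c ^ 2) * φ ξ
      + (3 / 2) * c * (φ ξ) ^ 2 - (1 / 2) * (φ ξ) ^ 3 = 0)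
    (hlim : Filter.Tendsto φ Filter.atTop (nhds 0))
    (hlim' : Filter.Tendsto (deriv φ) Filter.atTop (nhds 0)) :
    (∀ ξ : ℝ, (deriv φ ξ) ^ 2
      = (1 - c ^ 2) * (φ ξ) ^ 2 + c * (φ ξ) ^ 3 - (1 / 4) * (φ ξ) ^ 4) ∧
    (1 < |c| → ∀ ξ : ℝ, φ ξ = 0) := by
  have hd : Differentiable ℝ φ := hφ.differentiable (by norm_num)
  have hd1 : ContDiff ℝ 1 (deriv φ) := by
    have h2 : ContDiff ℝ (1 + 1) φ := by
      have : (1 + 1 : WithTop ℕ∞) = 2 := by norm_num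
      rw [this]; exact hφ
    exact (contDiff_succ_iff_deriv.1 h2).2.2
  have hd' : Differentiable ℝ (deriv φ) := hd1.differentiable (by norm_num)
  have first : ∀ ξ : ℝ, (deriv φ ξ) ^ 2
      = (1 - c ^ 2) * (φ ξ) ^ 2 + c * (φ ξ) ^ 3 - (1 / 4) * (φ ξ) ^ 4 := by
    set E : ℝ → ℝ := fun x => (deriv φ x) ^ 2
      - ((1 - c ^ 2) * (φ x) ^ 2 + c * (φ x) ^ 3 - (1 / 4) * (φ x) ^ 4) with hE
    have hder : ∀ x, HasDerivAt E 0 x := by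
      intro x
      have h1 := (hd x).hasDerivAt
      have h2 := (hd' x).hasDerivAt
      have h := (h2.pow 2).sub ((((h1.pow 2).const_mul (1 - c ^ 2)).add
        ((h1.pow 3).const_mul c)).sub ((h1.pow 4).const_mul (1 / 4)))
      refine HasDerivAt.congr_deriv h ?_
      push_cast
      simp only [Nat.add_one_sub_one, pow_one]
      linear_combination (-2 * deriv φ x) * heq x
    have hconst : ∀ x y, E x = E y :=
      is_const_of_deriv_eq_zero (fun x => (hder x).differentiableAt) (fun x => (hder x).deriv)
    have hEl : Filter.Tendsto E Filter.atTop (nhds 0) := by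
      have h := (hlim'.pow 2).sub ((((hlim.pow 2).const_mul (1 - c ^ 2)).add
        ((hlim.pow 3).const_mul c)).sub ((hlim.pow 4).const_mul (1 / 4)))
      simpa [hE] using h
    intro ξ
    have h0 : E ξ = 0 := by
      have h1 : Filter.Tendsto E Filter.atTop (nhds (E ξ)) := by
        have : E = fun _ => E ξ := funext fun y => hconst y ξ
        rw [this]; exact tendsto_const_nhds
      exact tendsto_nhds_unique h1 hEl
    simp only [hE] at h0
    linarith
  refine ⟨first, fun hc ξ => ?_⟩
  have gap : ∀ x, φ x ≠ 0 → 2 * (|c| - 1) ≤ |φ x| := by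
    intro x hx
    have h1 : 0 < (φ x) ^ 2 := by positivity
    have h2 : 0 ≤ (φ x) ^ 2 * ((1 - c ^ 2) + c * φ x - (φ x) ^ 2 / 4) := by
      have := first x
      nlinarith [sq_nonneg (deriv φ x)]
    have h3 := nonneg_of_mul_nonneg_right h2 h1
    have h4 : c * φ x ≤ |c| * |φ x| := by
      rw [← abs_mul]; exact le_abs_self _
    have h5 := sq_abs c
    have h6 := sq_abs (φ x)
    have h7 : (|φ x| / 2 - |c|) ^ 2 ≤ 1 := by nlinarith
    have h8 := abs_le_of_sq_le_sq' (by simpa using h7 : (|φ x| / 2 - |c|) ^ 2 ≤ 1 ^ 2) zero_le_one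
    linarith [h8.1]
  by_contra hne
  have hm : 0 < |c| - 1 := by linarith
  have habs : Filter.Tendsto (fun x => |φ x|) Filter.atTop (nhds 0) := by simpa using hlim.abs
  obtain ⟨y, hy⟩ := (habs.eventually (gt_mem_nhds hm)).exists
  obtain ⟨z, hz⟩ := mem_range_of_exists_le_of_exists_ge (c := |c| - 1) hd.continuous.abs
    ⟨y, hy.le⟩ ⟨ξ, by linarith [gap ξ hne]⟩
  simp only at hz
  have hz0 : φ z ≠ 0 := by
    intro h
    rw [h, abs_zero] at hz
    linarith
  linarith [gap z hz0]
end

section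
/- Let c be a real number with |c| < 1 and ε > 0. Then the function v_{c,ε}(ξ) = 2(1−c²) / ( ε [ cosh(√(1−c²) ε^{−1/2} ξ) − c ] ) is a smooth solution on ℝ of the ordinary differential equation −ε φ'' + (1−c²) φ + (3/2) c ε φ² − (ε²/2) φ³ = 0. -/
/-- For `|c| < 1` and `ε > 0`, the function
`v_{c,ε}(ξ) = 2(1−c²)/(ε[cosh(√(1−c²) ε^{−1/2} ξ) − c])` is a smooth solution of
`−ε φ'' + (1−c²) φ + (3/2) c ε φ² − (ε²/2) φ³ = 0`. -/
theorem stmt_4 (c ε : ℝ) (hc : |c| < 1) (hε : 0 < ε) (v : ℝ → ℝ)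
    (hv : ∀ ξ, v ξ = 2 * (1 - c ^ 2) /
      (ε * (Real.cosh (Real.sqrt (1 - c ^ 2) * ξ / Real.sqrt ε) - c))) :
    ContDiff ℝ (⊤ : ℕ∞) v ∧
    (∀ ξ : ℝ, -ε * deriv (deriv v) ξ + (1 - c ^ 2) * v ξ
      + (3 / 2) * c * ε * (v ξ) ^ 2 - (ε ^ 2 / 2) * (v ξ) ^ 3 = 0) := by
  have hc2 : 0 < 1 - c ^ 2 := by
    have := (sq_lt_one_iff_abs_lt_one c).2 hc
    linarith
  obtain ⟨k, hk⟩ : ∃ k, k = Real.sqrt (1 - c ^ 2) / Real.sqrt ε := ⟨_, rfl⟩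
  have hk2 : k ^ 2 * ε = 1 - c ^ 2 := by
    rw [hk, div_pow, Real.sq_sqrt hc2.le, Real.sq_sqrt hε.le]
    field_simp
  have hD : ∀ x : ℝ, Real.cosh (k * x) - c ≠ 0 := by
    intro x
    have h1 := Real.one_le_cosh (k * x)
    have h2 := (abs_lt.1 hc).2
    linarith
  have hv' : v = fun x => 2 * k ^ 2 / (Real.cosh (k * x) - c) := by
    funext x
    have hx := hD x
    rw [hv x, show Real.sqrt (1 - c ^ 2) * x / Real.sqrt ε = k * x by rw [hk]; ring, ← hk2]
    field_simp
  have hlin : ∀ x : ℝ, HasDerivAt (fun x : ℝ => k * x) k x := fun x => by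
    simpa using (hasDerivAt_id x).const_mul k
  have hd1 : deriv v = fun x => -(2 * k ^ 3 * Real.sinh (k * x)) / (Real.cosh (k * x) - c) ^ 2 := by
    funext x
    rw [hv']
    have h := (hasDerivAt_const x (2 * k ^ 2)).div ((hlin x).cosh.sub_const c) (hD x)
    refine (h.congr_deriv ?_).deriv
    ring
  refine ⟨?_, fun x => ?_⟩
  · rw [hv']
    refine contDiff_const.div ?_ hD
    exact ((contDiff_const.mul contDiff_id).cosh).sub contDiff_const
  · have hx := hD x
    have h := (((hlin x).sinh.const_mul (2 * k ^ 3)).neg).div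
      (((hlin x).cosh.sub_const c).pow 2) (pow_ne_zero 2 hx)
    have hd2 : deriv (deriv v) x = 2 * k ^ 4 *
        (2 * Real.sinh (k * x) ^ 2 - Real.cosh (k * x) * (Real.cosh (k * x) - c))
          / (Real.cosh (k * x) - c) ^ 3 := by
      rw [hd1]
      refine (h.congr_deriv ?_).deriv
      simp only [Pi.pow_apply, Pi.neg_apply]
      field_simp
      ring
    rw [hd2, hv']
    have hs := Real.sinh_sq (k * x)
    rw [hs, ← hk2]
    field_simp
    have hk3 : c ^ 2 = 1 - k ^ 2 * ε := by linarith
    linear_combination (-4 * ε * k ^ 4) * hk3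
end

section
/- Let k > 1 and define v(ξ) = 2(k²−1)/(cosh(√(3(k²−1)) ξ) + k). Then v satisfies the first-integral equation of the solitary waves of the 'bad' Kaup–Broer–Kupershmidt system with a = 1/3: (v'(ξ))² = (3/4) v(ξ)² (v(ξ) − (2k−2)) (v(ξ) − (2k+2)) for all ξ ∈ ℝ. -/
/-- For `k > 1`, the profile `v(ξ) = 2(k²−1)/(cosh(√(3(k²−1)) ξ) + k)` satisfies the
first-integral equation of the solitary waves of the bad KBK system (`a = 1/3`):
`(v')² = (3/4) v² (v − (2k−2)) (v − (2k+2))`. -/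
theorem stmt_5 (k : ℝ) (hk : 1 < k) (v : ℝ → ℝ)
    (hv : ∀ ξ, v ξ = 2 * (k ^ 2 - 1) / (Real.cosh (Real.sqrt (3 * (k ^ 2 - 1)) * ξ) + k)) :
    ∀ ξ : ℝ, (deriv v ξ) ^ 2
      = (3 / 4) * (v ξ) ^ 2 * (v ξ - (2 * k - 2)) * (v ξ - (2 * k + 2)) := by
  intro ξ
  have hm : 0 ≤ 3 * (k ^ 2 - 1) := by nlinarith
  have hs := Real.sq_sqrt hm
  have hfun : v = fun ξ => 2 * (k ^ 2 - 1) /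
      (Real.cosh (Real.sqrt (3 * (k ^ 2 - 1)) * ξ) + k) := funext hv
  rw [hv ξ]
  generalize Real.sqrt (3 * (k ^ 2 - 1)) = s at *
  have hD : Real.cosh (s * ξ) + k ≠ 0 := by
    have := Real.cosh_pos (s * ξ)
    linarith
  have h1 : HasDerivAt (fun x : ℝ => s * x) s ξ := by
    simpa using (hasDerivAt_id ξ).const_mul s
  have h2 : HasDerivAt (fun x : ℝ => Real.cosh (s * x) + k) (Real.sinh (s * ξ) * s) ξ :=
    h1.cosh.add_const k
  have h3 := (hasDerivAt_const ξ (2 * (k ^ 2 - 1))).fun_div h2 hD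
  rw [hfun, h3.deriv]
  have hS := Real.sinh_sq (s * ξ)
  generalize Real.sinh (s * ξ) = S at *
  generalize Real.cosh (s * ξ) = C at *
  have e : ((0 * (C + k) - 2 * (k ^ 2 - 1) * (S * s)) / (C + k) ^ 2) ^ 2
      = 4 * (k ^ 2 - 1) ^ 2 * (S ^ 2 * s ^ 2) / (C + k) ^ 4 := by
    field_simp
    ring
  rw [e, hS, hs]
  field_simp
  ring
end

section
/- Let k > 1, β = √(3(k²−1)), v(ξ) = 2(k²−1)/(cosh(βξ) + k), and η(ξ) = v(ξ)(k − v(ξ)/2). Then: (i) v is even and strictly decreasing on (0, ∞), with sup_{ξ∈ℝ} v(ξ) = v(0) = 2(k−1); (ii) if 1 < k ≤ 2, then η is strictly decreasing on (0, ∞) and sup_{ξ∈ℝ} |η(ξ)| = sup_{ξ∈ℝ} |v(ξ)| = 2(k−1). -/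
theorem iSup_eq_of_max (f : ℝ → ℝ) (c : ℝ) (h : ∀ x, f x ≤ c) (h0 : f 0 = c) :
    (⨆ x : ℝ, f x) = c := by
  apply le_antisymm (ciSup_le h)
  rw [← h0]
  exact le_ciSup (f := f) ⟨c, by rintro _ ⟨x, rfl⟩; exact h x⟩ 0

/-- Monotonicity and supremum properties of the bad-KBK solitary wave profiles:
`v` is even, strictly decreasing on `(0,∞)` with supremum `v(0) = 2(k−1)`, and for
`1 < k ≤ 2` the elevation `η = v(k − v/2)` is strictly decreasing on `(0,∞)` with
`sup |η| = sup |v| = 2(k−1)`. -/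
theorem stmt_7 (k β : ℝ) (hk : 1 < k) (hβ : β = Real.sqrt (3 * (k ^ 2 - 1)))
    (v η : ℝ → ℝ)
    (hv : ∀ ξ, v ξ = 2 * (k ^ 2 - 1) / (Real.cosh (β * ξ) + k))
    (hη : ∀ ξ, η ξ = v ξ * (k - v ξ / 2)) :
    ((∀ ξ, v (-ξ) = v ξ) ∧ StrictAntiOn v (Set.Ioi (0 : ℝ)) ∧
      (⨆ ξ : ℝ, v ξ) = v 0 ∧ v 0 = 2 * (k - 1)) ∧
    (k ≤ 2 → StrictAntiOn η (Set.Ioi (0 : ℝ)) ∧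
      (⨆ ξ : ℝ, |η ξ|) = 2 * (k - 1) ∧ (⨆ ξ : ℝ, |v ξ|) = 2 * (k - 1)) := by
  have hk2 : 0 < k ^ 2 - 1 := by nlinarith
  have hβ0 : 0 < β := by rw [hβ]; exact Real.sqrt_pos.mpr (by linarith)
  have hc : ∀ ξ, 1 ≤ Real.cosh (β * ξ) := fun ξ => Real.one_le_cosh _
  have hpos : ∀ ξ, 0 < v ξ := by
    intro ξ
    rw [hv]
    have := hc ξ
    exact div_pos (by linarith) (by linarith)
  have hle : ∀ ξ, v ξ ≤ 2 * (k - 1) := by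
    intro ξ
    have := hc ξ
    rw [hv, div_le_iff₀ (by linarith)]
    nlinarith
  have h0 : v 0 = 2 * (k - 1) := by
    rw [hv, mul_zero, Real.cosh_zero, div_eq_iff (by linarith)]
    ring
  have hanti : StrictAntiOn v (Set.Ioi (0 : ℝ)) := by
    intro x hx y hy hxy
    rw [Set.mem_Ioi] at hx hy
    rw [hv x, hv y]
    have h1 : Real.cosh (β * x) < Real.cosh (β * y) := by
      rw [Real.cosh_lt_cosh, abs_of_pos (mul_pos hβ0 hx), abs_of_pos (mul_pos hβ0 hy)]
      exact mul_lt_mul_of_pos_left hxy hβ0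
    have := hc x
    exact div_lt_div_of_pos_left (by linarith) (by linarith) (by linarith)
  refine ⟨⟨fun ξ => ?_, hanti, ?_, h0⟩, fun hk' => ⟨?_, ?_, ?_⟩⟩
  · rw [hv, hv, mul_neg, Real.cosh_neg]
  · rw [h0]
    exact iSup_eq_of_max v _ hle h0
  · intro x hx y hy hxy
    have h1 := hanti hx hy hxy
    have h2 := hle x
    rw [hη x, hη y]
    have h3 : 0 < (v x - v y) * (k - (v x + v y) / 2) :=
      mul_pos (by linarith) (by linarith)
    nlinarith
  · apply iSup_eq_of_max
    · intro x
      have h1 := hpos x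
      have h2 := hle x
      rw [hη, abs_of_nonneg (mul_nonneg h1.le (by linarith))]
      have h3 : 0 ≤ (2 * (k - 1) - v x) * (k - (2 * (k - 1) + v x) / 2) :=
        mul_nonneg (by linarith) (by linarith)
      nlinarith
    · rw [hη, h0, abs_of_nonneg (mul_nonneg (by linarith) (by linarith))]
      ring
  · apply iSup_eq_of_max
    · intro x
      rw [abs_of_pos (hpos x)]
      exact hle x
    · rw [abs_of_pos (hpos 0), h0]
end

section
/- Let k > 2, β = √(3(k²−1)), v(ξ) = 2(k²−1)/(cosh(βξ) + k), and η(ξ) = v(ξ)(k − v(ξ)/2). Then sup_{ξ∈ℝ} η(ξ) = k²/2 > 2(k−1) = η(0), and in particular η is not monotone on (0, ∞): there exists ξ₀ > 0 with η(ξ₀) > η(0). -/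
/-- For `k > 2`, the elevation profile `η = v(k − v/2)` of the bad-KBK solitary wave satisfies
`sup η = k²/2 > 2(k−1) = η(0)`, and in particular `η` is not monotone on `(0,∞)`:
there is `ξ₀ > 0` with `η(ξ₀) > η(0)`. -/
theorem stmt_8 (k β : ℝ) (hk : 2 < k) (hβ : β = Real.sqrt (3 * (k ^ 2 - 1)))
    (v η : ℝ → ℝ)
    (hv : ∀ ξ, v ξ = 2 * (k ^ 2 - 1) / (Real.cosh (β * ξ) + k))
    (hη : ∀ ξ, η ξ = v ξ * (k - v ξ / 2)) :
    (⨆ ξ : ℝ, η ξ) = k ^ 2 / 2 ∧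
    k ^ 2 / 2 > 2 * (k - 1) ∧
    η 0 = 2 * (k - 1) ∧
    ∃ ξ₀ > (0 : ℝ), η ξ₀ > η 0 := by
  have hβ0 : 0 < β := by
    rw [hβ]; apply Real.sqrt_pos.mpr; nlinarith
  have hk0 : k ≠ 0 := by linarith
  have hc1 : 1 < k - 2 / k := by
    have h : k - 2 / k - 1 = (k - 2) * (k + 1) / k := by field_simp; ring
    have h2 : 0 < (k - 2) * (k + 1) / k := by
      apply div_pos
      · nlinarith
      · linarith
    linarith
  have h0 : η 0 = 2 * (k - 1) := by
    have hv0 : v 0 = 2 * (k - 1) := by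
      rw [hv, mul_zero, Real.cosh_zero, div_eq_iff (by linarith)]
      ring
    rw [hη, hv0]; ring
  have hgt : k ^ 2 / 2 > 2 * (k - 1) := by nlinarith [mul_pos (sub_pos.mpr hk) (sub_pos.mpr hk)]
  obtain ⟨x, hx0, hx⟩ : ∃ x > (0 : ℝ), η x = k ^ 2 / 2 := by
    refine ⟨Real.arcosh (k - 2 / k) / β, div_pos (Real.arcosh_pos hc1) hβ0, ?_⟩
    have hvx : v (Real.arcosh (k - 2 / k) / β) = k := by
      rw [hv, mul_div_cancel₀ _ hβ0.ne', Real.cosh_arcosh hc1.le, div_eq_iff (by linarith)]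
      field_simp
      ring
    rw [hη, hvx]; ring
  have hle : ∀ ξ, η ξ ≤ k ^ 2 / 2 := by
    intro ξ
    rw [hη]; nlinarith [sq_nonneg (v ξ - k)]
  refine ⟨?_, hgt, h0, x, hx0, by rw [hx, h0]; exact hgt⟩
  apply le_antisymm (ciSup_le hle)
  rw [← hx]
  exact le_ciSup ⟨k ^ 2 / 2, by rintro _ ⟨ξ, rfl⟩; exact hle ξ⟩ x
end

section
/- Let (η, v) be a smooth real solution on ℝ×ℝ of the 'bad' Kaup–Broer–Kupershmidt system ∂_t η + ∂_x v + ∂_x(η v) + ∂_x³ v = 0, ∂_t v + ∂_x η + v ∂_x v = 0, and define h := η + ∂_x v. Then (h, v) is a smooth solution of the system ∂_t h + ∂_x v + ∂_x² h + ∂_x(v h) = 0, ∂_t v + ∂_x h − ∂_x² v + v ∂_x v = 0. -/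
namespace KBK

lemma hasX {f : ℝ → ℝ → ℝ} (hf : ContDiff ℝ (⊤ : ℕ∞) (fun p : ℝ × ℝ => f p.1 p.2)) (x t : ℝ) :
    HasDerivAt (fun y => f y t) (fderiv ℝ (fun p : ℝ × ℝ => f p.1 p.2) (x, t) (1, 0)) x := by
  have h1 := ((hf.differentiable (by simp)) (x, t)).hasFDerivAt
  have h2 : HasDerivAt (fun y : ℝ => (y, t)) ((1 : ℝ), (0 : ℝ)) x :=
    (hasDerivAt_id x).prodMk (hasDerivAt_const x t)
  exact HasFDerivAt.comp_hasDerivAt x h1 h2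

lemma hasT {f : ℝ → ℝ → ℝ} (hf : ContDiff ℝ (⊤ : ℕ∞) (fun p : ℝ × ℝ => f p.1 p.2)) (x t : ℝ) :
    HasDerivAt (fun s => f x s) (fderiv ℝ (fun p : ℝ × ℝ => f p.1 p.2) (x, t) (0, 1)) t := by
  have h1 := ((hf.differentiable (by simp)) (x, t)).hasFDerivAt
  have h2 : HasDerivAt (fun s : ℝ => (x, s)) ((0 : ℝ), (1 : ℝ)) t :=
    (hasDerivAt_const t x).prodMk (hasDerivAt_id t)
  exact HasFDerivAt.comp_hasDerivAt t h1 h2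

lemma smF {F : ℝ × ℝ → ℝ} (hf : ContDiff ℝ (⊤ : ℕ∞) F) (w : ℝ × ℝ) :
    ContDiff ℝ (⊤ : ℕ∞) (fun p => fderiv ℝ F p w) :=
  (hf.fderiv_right (m := (⊤ : ℕ∞)) (by simp)).clm_apply contDiff_const

lemma smX {f : ℝ → ℝ → ℝ} (hf : ContDiff ℝ (⊤ : ℕ∞) (fun p : ℝ × ℝ => f p.1 p.2)) :
    ContDiff ℝ (⊤ : ℕ∞) (fun p : ℝ × ℝ => deriv (fun y => f y p.2) p.1) := by
  have := smF hf (1, 0)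
  convert this using 2 with p
  exact (hasX hf p.1 p.2).deriv

lemma comm {f : ℝ → ℝ → ℝ} (hf : ContDiff ℝ (⊤ : ℕ∞) (fun p : ℝ × ℝ => f p.1 p.2)) (x t : ℝ) :
    deriv (fun s => deriv (fun y => f y s) x) t = deriv (fun y => deriv (fun s => f y s) t) x := by
  simp_rw [fun x t => (hasX hf x t).deriv, fun x t => (hasT hf x t).deriv]
  have hX := smF hf (1, 0)
  have hT := smF hf (0, 1)
  have e1 := (hasT (f := fun a b => fderiv ℝ (fun p : ℝ × ℝ => f p.1 p.2) (a, b) (1, 0)) hX x t).deriv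
  have e2 := (hasX (f := fun a b => fderiv ℝ (fun p : ℝ × ℝ => f p.1 p.2) (a, b) (0, 1)) hT x t).deriv
  rw [e1, e2]
  have hd : DifferentiableAt ℝ (fderiv ℝ (fun p : ℝ × ℝ => f p.1 p.2)) (x, t) :=
    ((hf.fderiv_right (m := (⊤ : ℕ∞)) (by simp)).differentiable (by simp)) _
  have hs : IsSymmSndFDerivAt ℝ (fun p : ℝ × ℝ => f p.1 p.2) (x, t) :=
    hf.contDiffAt.isSymmSndFDerivAt (by simp only [minSmoothness_of_isRCLikeNormedField]; exact WithTop.coe_le_coe.2 (le_top : (2 : ℕ∞) ≤ ⊤))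
  simp only [Prod.mk.eta]
  rw [fderiv_clm_apply hd (differentiableAt_const _), fderiv_clm_apply hd (differentiableAt_const _)]
  simpa using hs (0, 1) (1, 0)

end KBK

/-- The change of variable `h = η + ∂_x v` transforms smooth solutions of the bad KBK system
into solutions of `∂_t h + ∂_x v + ∂_x² h + ∂_x(vh) = 0`, `∂_t v + ∂_x h − ∂_x² v + v∂_x v = 0`. -/
theorem stmt_12 (η v : ℝ → ℝ → ℝ)
    (hη : ContDiff ℝ (⊤ : ℕ∞) (fun p : ℝ × ℝ => η p.1 p.2))
    (hv : ContDiff ℝ (⊤ : ℕ∞) (fun p : ℝ × ℝ => v p.1 p.2))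
    (heq1 : ∀ x t : ℝ,
      deriv (fun s => η x s) t + deriv (fun y => v y t) x
        + deriv (fun y => η y t * v y t) x + iteratedDeriv 3 (fun y => v y t) x = 0)
    (heq2 : ∀ x t : ℝ,
      deriv (fun s => v x s) t + deriv (fun y => η y t) x
        + v x t * deriv (fun y => v y t) x = 0)
    (h : ℝ → ℝ → ℝ)
    (hh : ∀ x t : ℝ, h x t = η x t + deriv (fun y => v y t) x) :
    ContDiff ℝ (⊤ : ℕ∞) (fun p : ℝ × ℝ => h p.1 p.2) ∧
    (∀ x t : ℝ,
      deriv (fun s => h x s) t + deriv (fun y => v y t) x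
        + iteratedDeriv 2 (fun y => h y t) x + deriv (fun y => v y t * h y t) x = 0) ∧
    (∀ x t : ℝ,
      deriv (fun s => v x s) t + deriv (fun y => h y t) x
        - iteratedDeriv 2 (fun y => v y t) x + v x t * deriv (fun y => v y t) x = 0) := by
  have hvx := KBK.smX hv
  have hvxx := KBK.smX (f := fun x t => deriv (fun y => v y t) x) hvx
  have hηx := KBK.smX hη
  have dη := fun x t => (KBK.hasX hη x t).differentiableAt
  have dηt := fun x t => (KBK.hasT hη x t).differentiableAt
  have dv := fun x t => (KBK.hasX hv x t).differentiableAt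
  have dvx := fun x t => (KBK.hasX (f := fun x t => deriv (fun y => v y t) x) hvx x t).differentiableAt
  have dvxt := fun x t => (KBK.hasT (f := fun x t => deriv (fun y => v y t) x) hvx x t).differentiableAt
  have dvxx := fun x t => (KBK.hasX (f := fun x t => deriv (fun y => deriv (fun y => v y t) y) x)
    hvxx x t).differentiableAt
  have dηx := fun x t => (KBK.hasX (f := fun x t => deriv (fun y => η y t) x) hηx x t).differentiableAt
  have hhx : ∀ x t, deriv (fun y => h y t) x
      = deriv (fun y => η y t) x + deriv (fun y => deriv (fun y => v y t) y) x := by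
    intro x t
    simp_rw [hh]
    exact deriv_fun_add (dη x t) (dvx x t)
  refine ⟨?_, ?_, ?_⟩
  · simp_rw [hh]
    exact hη.add hvx
  · intro x t
    have e1 := heq1 x t
    have i2 : iteratedDeriv 2 (fun y => h y t) x = deriv (fun y => deriv (fun y => η y t) y) x
        + deriv (fun y => deriv (fun y => deriv (fun y => v y t) y) y) x := by
      rw [iteratedDeriv_succ, iteratedDeriv_one]
      have : deriv (fun y => h y t) = fun y => deriv (fun y => η y t) y
        + deriv (fun y => deriv (fun y => v y t) y) y := funext fun y => hhx y t
      rw [this]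
      exact deriv_fun_add (dηx x t) (dvxx x t)
    have i3 : iteratedDeriv 3 (fun y => v y t) x
        = deriv (fun y => deriv (fun y => deriv (fun y => v y t) y) y) x := by
      rw [iteratedDeriv_succ, iteratedDeriv_succ, iteratedDeriv_one]
    have ht : deriv (fun s => h x s) t
        = deriv (fun s => η x s) t + deriv (fun s => deriv (fun y => v y s) x) t := by
      simp_rw [hh]
      exact deriv_fun_add (dηt x t) (dvxt x t)
    have hvt : (fun y => deriv (fun s => v y s) t)
        = fun y => -(deriv (fun y => η y t) y + v y t * deriv (fun y => v y t) y) := by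
      funext y
      linarith [heq2 y t]
    have e3 : deriv (fun y => -(deriv (fun y => η y t) y + v y t * deriv (fun y => v y t) y)) x
        = -(deriv (fun y => deriv (fun y => η y t) y) x + (deriv (fun y => v y t) x *
          deriv (fun y => v y t) x + v x t * deriv (fun y => deriv (fun y => v y t) y) x)) :=
      ((dηx x t).hasDerivAt.add ((dv x t).hasDerivAt.mul (dvx x t).hasDerivAt)).neg.deriv
    have e4 : deriv (fun y => v y t * h y t) x = deriv (fun y => v y t) x * h x t
        + v x t * deriv (fun y => h y t) x := by
      refine deriv_fun_mul (dv x t) ?_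
      simp_rw [hh]
      exact (dη x t).add (dvx x t)
    have e5 : deriv (fun y => η y t * v y t) x = deriv (fun y => η y t) x * v x t
        + η x t * deriv (fun y => v y t) x := deriv_fun_mul (dη x t) (dv x t)
    rw [ht, KBK.comm hv, hvt, e3, i2, e4, hhx, hh]
    rw [e5, i3] at e1
    linear_combination e1
  · intro x t
    have e2 := heq2 x t
    have i2 : iteratedDeriv 2 (fun y => v y t) x
        = deriv (fun y => deriv (fun y => v y t) y) x := by
      rw [iteratedDeriv_succ, iteratedDeriv_one]
    rw [hhx, i2]
    linear_combination e2
end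

section
/- Let (η, v) be a smooth real solution on ℝ×ℝ of the good Kaup–Broer–Kupershmidt system ∂_t η + ∂_x v + ∂_x(η v) − ∂_x³ v = 0, ∂_t v + ∂_x η + v ∂_x v = 0, and define the complex-valued function h := η − i ∂_x v. Then (h, v) satisfies the Schrödinger-like system ∂_t h + ∂_x v − i ∂_x² h + ∂_x(v h) = 0, ∂_t v + ∂_x h + i ∂_x² v + v ∂_x v = 0. -/
lemma hasDerivAt_eval {E : Type*} [NormedAddCommGroup E] [NormedSpace ℝ E]
    (G : ℝ → E →L[ℝ] ℝ) (G' : E →L[ℝ] ℝ) (x : ℝ) (w : E) (hG : HasDerivAt G G' x) :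
    HasDerivAt (fun y => G y w) (G' w) x :=
  (ContinuousLinearMap.apply ℝ ℝ w).hasFDerivAt.comp_hasDerivAt x hG

/-- Partial derivatives of a smooth function of two variables: existence, smoothness and
symmetry of the mixed second derivatives. -/
lemma partials (f : ℝ → ℝ → ℝ)
    (hf : ContDiff ℝ (⊤ : ℕ∞) (fun p : ℝ × ℝ => f p.1 p.2)) :
    ∃ fx ft : ℝ → ℝ → ℝ,
      ContDiff ℝ (⊤ : ℕ∞) (fun p : ℝ × ℝ => fx p.1 p.2) ∧
      (∀ x t, HasDerivAt (fun y => f y t) (fx x t) x) ∧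
      (∀ x t, HasDerivAt (fun s => f x s) (ft x t) t) ∧
      (∀ x t m, HasDerivAt (fun s => fx x s) m t → HasDerivAt (fun y => ft y t) m x) := by
  set F : ℝ × ℝ → ℝ := fun p => f p.1 p.2 with hF
  have hD : ContDiff ℝ (⊤ : ℕ∞) (fderiv ℝ F) := hf.fderiv_right (by norm_cast)
  have hd1 : ∀ p, HasFDerivAt F (fderiv ℝ F p) p := fun p =>
    (hf.differentiable (by simp) p).hasFDerivAt
  have hd2 : ∀ p, HasFDerivAt (fderiv ℝ F) (fderiv ℝ (fderiv ℝ F) p) p := fun p =>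
    (hD.differentiable (by simp) p).hasFDerivAt
  have cx : ∀ x t : ℝ, HasDerivAt (fun y : ℝ => (y, t)) ((1 : ℝ), (0 : ℝ)) x := fun x t =>
    (hasDerivAt_id x).prodMk (hasDerivAt_const x t)
  have ct : ∀ x t : ℝ, HasDerivAt (fun s : ℝ => (x, s)) ((0 : ℝ), (1 : ℝ)) t := fun x t =>
    (hasDerivAt_const t x).prodMk (hasDerivAt_id t)
  refine ⟨fun x t => fderiv ℝ F (x, t) (1, 0), fun x t => fderiv ℝ F (x, t) (0, 1),
    hD.clm_apply contDiff_const, ?_, ?_, ?_⟩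
  · intro x t
    exact (hd1 (x, t)).comp_hasDerivAt x (cx x t)
  · intro x t
    exact (hd1 (x, t)).comp_hasDerivAt t (ct x t)
  · intro x t m hm
    have e1 : HasDerivAt (fun s => fderiv ℝ F (x, s) (1, 0))
        (fderiv ℝ (fderiv ℝ F) (x, t) (0, 1) (1, 0)) t :=
      hasDerivAt_eval _ _ _ _ ((hd2 (x, t)).comp_hasDerivAt t (ct x t))
    have e2 : HasDerivAt (fun y => fderiv ℝ F (y, t) (0, 1))
        (fderiv ℝ (fderiv ℝ F) (x, t) (1, 0) (0, 1)) x :=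
      hasDerivAt_eval _ _ _ _ ((hd2 (x, t)).comp_hasDerivAt x (cx x t))
    have hs : IsSymmSndFDerivAt ℝ F (x, t) :=
      hf.contDiffAt.isSymmSndFDerivAt (by
        simp only [minSmoothness_of_isRCLikeNormedField]
        exact WithTop.coe_le_coe.2 (le_top : (2 : ℕ∞) ≤ ⊤))
    rw [hm.unique e1, hs.eq]
    exact e2


/-- The complex change of variable `h = η − i ∂_x v` transforms smooth solutions of the good
KBK system into solutions of the Schrödinger-like system
`∂_t h + ∂_x v − i∂_x² h + ∂_x(vh) = 0`, `∂_t v + ∂_x h + i∂_x² v + v∂_x v = 0`. -/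
theorem stmt_13 (η v : ℝ → ℝ → ℝ)
    (hη : ContDiff ℝ (⊤ : ℕ∞) (fun p : ℝ × ℝ => η p.1 p.2))
    (hv : ContDiff ℝ (⊤ : ℕ∞) (fun p : ℝ × ℝ => v p.1 p.2))
    (heq1 : ∀ x t : ℝ,
      deriv (fun s => η x s) t + deriv (fun y => v y t) x
        + deriv (fun y => η y t * v y t) x - iteratedDeriv 3 (fun y => v y t) x = 0)
    (heq2 : ∀ x t : ℝ,
      deriv (fun s => v x s) t + deriv (fun y => η y t) x
        + v x t * deriv (fun y => v y t) x = 0)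
    (h : ℝ → ℝ → ℂ)
    (hh : ∀ x t : ℝ, h x t = (η x t : ℂ) - Complex.I * (deriv (fun y => v y t) x : ℂ)) :
    (∀ x t : ℝ,
      deriv (fun s => h x s) t + (deriv (fun y => v y t) x : ℂ)
        - Complex.I * iteratedDeriv 2 (fun y => h y t) x
        + deriv (fun y => (v y t : ℂ) * h y t) x = 0) ∧
    (∀ x t : ℝ,
      (deriv (fun s => v x s) t : ℂ) + deriv (fun y => h y t) x
        + Complex.I * (iteratedDeriv 2 (fun y => v y t) x : ℂ)
        + (v x t : ℂ) * (deriv (fun y => v y t) x : ℂ) = 0) := by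
  obtain ⟨vx, vt, svx, dvx, dvt, vsym⟩ := partials v hv
  obtain ⟨vxx, vxt, svxx, dvxx, dvxt, -⟩ := partials vx svx
  obtain ⟨vxxx, -, -, dvxxx, -, -⟩ := partials vxx svxx
  obtain ⟨ηx, ηt, sηx, dηx, dηt, -⟩ := partials η hη
  obtain ⟨ηxx, -, -, dηxx, -, -⟩ := partials ηx sηx
  have cvx : ∀ t, deriv (fun y => (v y t : ℂ)) = fun y => (vx y t : ℂ) := fun t =>
    funext fun x => (dvx x t).ofReal_comp.deriv
  have cvxx : ∀ t, deriv (fun y => (vx y t : ℂ)) = fun y => (vxx y t : ℂ) := fun t =>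
    funext fun x => (dvxx x t).ofReal_comp.deriv
  have rvx : ∀ t, deriv (fun y => v y t) = fun y => vx y t := fun t =>
    funext fun x => (dvx x t).deriv
  have rvxx : ∀ t, deriv (fun y => vx y t) = fun y => vxx y t := fun t =>
    funext fun x => (dvxx x t).deriv
  have rvxxx : ∀ t, deriv (fun y => vxx y t) = fun y => vxxx y t := fun t =>
    funext fun x => (dvxxx x t).deriv
  have hh' : ∀ x t, h x t = (η x t : ℂ) - Complex.I * (vx x t : ℂ) := by
    intro x t
    rw [hh, cvx]
  have dhx : ∀ x t, HasDerivAt (fun y => h y t)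
      ((ηx x t : ℂ) - Complex.I * (vxx x t : ℂ)) x := by
    intro x t
    simp only [hh']
    exact (dηx x t).ofReal_comp.sub ((dvxx x t).ofReal_comp.const_mul _)
  have dhxx : ∀ x t, HasDerivAt (fun y => (ηx y t : ℂ) - Complex.I * (vxx y t : ℂ))
      ((ηxx x t : ℂ) - Complex.I * (vxxx x t : ℂ)) x := fun x t =>
    (dηxx x t).ofReal_comp.sub ((dvxxx x t).ofReal_comp.const_mul _)
  have dht : ∀ x t, HasDerivAt (fun s => h x s)
      ((ηt x t : ℂ) - Complex.I * (vxt x t : ℂ)) t := by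
    intro x t
    simp only [hh']
    exact (dηt x t).ofReal_comp.sub ((dvxt x t).ofReal_comp.const_mul _)
  have chx : ∀ t, deriv (fun y => h y t) =
      fun y => (ηx y t : ℂ) - Complex.I * (vxx y t : ℂ) := fun t =>
    funext fun x => (dhx x t).deriv
  have E1 : ∀ x t, ηt x t + vx x t + (ηx x t * v x t + η x t * vx x t) - vxxx x t = 0 := by
    intro x t
    have := heq1 x t
    rw [(dηt x t).deriv, (dvx x t).deriv, ((dηx x t).fun_mul (dvx x t)).deriv] at this
    simpa only [iteratedDeriv_succ, iteratedDeriv_zero, rvx, rvxx, rvxxx] using this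
  have E2 : ∀ x t, vt x t + ηx x t + v x t * vx x t = 0 := by
    intro x t
    have := heq2 x t
    rwa [(dvt x t).deriv, (dvx x t).deriv, (dηx x t).deriv] at this
  have E3 : ∀ x t, vxt x t + ηxx x t + (vx x t * vx x t + v x t * vxx x t) = 0 := by
    intro x t
    have d := ((vsym x t _ (dvxt x t)).fun_add (dηxx x t)).fun_add
      ((dvx x t).fun_mul (dvxx x t))
    simp only [E2] at d
    exact d.unique (hasDerivAt_const x 0)
  refine ⟨fun x t => ?_, fun x t => ?_⟩
  · have e1 : ((ηt x t + vx x t + (ηx x t * v x t + η x t * vx x t) - vxxx x t : ℝ) : ℂ) = 0 := by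
      rw [E1]; simp
    have e3 : ((vxt x t + ηxx x t + (vx x t * vx x t + v x t * vxx x t) : ℝ) : ℂ) = 0 := by
      rw [E3]; simp
    push_cast at e1 e3
    have hi : iteratedDeriv 2 (fun y => h y t) x
        = (ηxx x t : ℂ) - Complex.I * (vxxx x t : ℂ) := by
      simp only [iteratedDeriv_succ, iteratedDeriv_zero, chx]
      exact (dhxx x t).deriv
    rw [(dht x t).deriv, cvx, hi, ((dvx x t).ofReal_comp.fun_mul (dhx x t)).deriv, hh']
    linear_combination e1 - Complex.I * e3 + (vxxx x t : ℂ) * Complex.I_sq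
  · have e2 : ((vt x t + ηx x t + v x t * vx x t : ℝ) : ℂ) = 0 := by
      rw [E2]; simp
    push_cast at e2
    have hi : iteratedDeriv 2 (fun y => (v y t : ℂ)) x = (vxx x t : ℂ) := by
      simp only [iteratedDeriv_succ, iteratedDeriv_zero, cvx, cvxx]
    rw [(dvt x t).ofReal_comp.deriv, cvx, hi, chx]
    linear_combination e2
end

section
/- Let ε > 0 and let v : ℝ² → ℝ² be a C³ vector field satisfying −ε Δv + v − (ε²/2)|v|² v = 0 on ℝ², where Δ acts componentwise and |v|² is the squared Euclidean norm, and set η := −(ε/2)|v|². Then ∇·v + ε ∇·(η v) − ε ∇·(Δv) = 0 and ∇η + (ε/2) ∇(|v|²) = 0 on ℝ²; consequently the time-independent pair (η, v) is a stationary solution of the two-dimensional good Kaup–Broer–Kupershmidt system ∂_t η + ∇·v + ε ∇·(η v) − ε Δ(∇·v) = 0, ∂_t v + ∇η + (ε/2) ∇(|v|²) = 0. -/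
/-- Partial derivative in the first variable of a function of two real variables. -/
noncomputable def pdx (f : ℝ → ℝ → ℝ) : ℝ → ℝ → ℝ :=
  fun x y => deriv (fun s => f s y) x

/-- Partial derivative in the second variable of a function of two real variables. -/
noncomputable def pdy (f : ℝ → ℝ → ℝ) : ℝ → ℝ → ℝ :=
  fun x y => deriv (fun s => f x s) y

/-- The Laplacian on `ℝ²` of a scalar function written in components. -/
noncomputable def lap (f : ℝ → ℝ → ℝ) : ℝ → ℝ → ℝ :=
  fun x y => pdx (pdx f) x y + pdy (pdy f) x y

lemma kbk_hx {f : ℝ → ℝ → ℝ} (hf : Differentiable ℝ (fun p : ℝ × ℝ => f p.1 p.2)) (x y : ℝ) :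
    HasDerivAt (fun s => f s y) (fderiv ℝ (fun p : ℝ × ℝ => f p.1 p.2) (x, y) (1, 0)) x := by
  have h1 : HasDerivAt (fun s : ℝ => (s, y)) ((1 : ℝ), (0 : ℝ)) x :=
    (hasDerivAt_id x).prodMk (hasDerivAt_const x y)
  exact (hf (x, y)).hasFDerivAt.comp_hasDerivAt x h1

lemma kbk_hy {f : ℝ → ℝ → ℝ} (hf : Differentiable ℝ (fun p : ℝ × ℝ => f p.1 p.2)) (x y : ℝ) :
    HasDerivAt (fun s => f x s) (fderiv ℝ (fun p : ℝ × ℝ => f p.1 p.2) (x, y) (0, 1)) y := by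
  have h1 : HasDerivAt (fun s : ℝ => (x, s)) ((0 : ℝ), (1 : ℝ)) y :=
    (hasDerivAt_const y x).prodMk (hasDerivAt_id y)
  exact (hf (x, y)).hasFDerivAt.comp_hasDerivAt y h1

lemma kbk_pdx_eq {f : ℝ → ℝ → ℝ} (hf : Differentiable ℝ (fun p : ℝ × ℝ => f p.1 p.2)) :
    (fun p : ℝ × ℝ => pdx f p.1 p.2) =
      fun p => fderiv ℝ (fun p : ℝ × ℝ => f p.1 p.2) p (1, 0) :=
  funext fun p => (kbk_hx hf p.1 p.2).deriv

lemma kbk_pdy_eq {f : ℝ → ℝ → ℝ} (hf : Differentiable ℝ (fun p : ℝ × ℝ => f p.1 p.2)) :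
    (fun p : ℝ × ℝ => pdy f p.1 p.2) =
      fun p => fderiv ℝ (fun p : ℝ × ℝ => f p.1 p.2) p (0, 1) :=
  funext fun p => (kbk_hy hf p.1 p.2).deriv

lemma kbk_cx {f : ℝ → ℝ → ℝ} {m n : WithTop ℕ∞} (hf : ContDiff ℝ n (fun p : ℝ × ℝ => f p.1 p.2))
    (h : m + 1 ≤ n) : ContDiff ℝ m (fun p : ℝ × ℝ => pdx f p.1 p.2) := by
  have h0 : n ≠ 0 := by
    rintro rfl
    simp at h
  rw [kbk_pdx_eq (hf.differentiable h0)]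
  exact (hf.fderiv_right h).clm_apply contDiff_const

lemma kbk_cy {f : ℝ → ℝ → ℝ} {m n : WithTop ℕ∞} (hf : ContDiff ℝ n (fun p : ℝ × ℝ => f p.1 p.2))
    (h : m + 1 ≤ n) : ContDiff ℝ m (fun p : ℝ × ℝ => pdy f p.1 p.2) := by
  have h0 : n ≠ 0 := by
    rintro rfl
    simp at h
  rw [kbk_pdy_eq (hf.differentiable h0)]
  exact (hf.fderiv_right h).clm_apply contDiff_const

lemma kbk_swap {f : ℝ → ℝ → ℝ} (hf : ContDiff ℝ 2 (fun p : ℝ × ℝ => f p.1 p.2)) :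
    pdx (pdy f) = pdy (pdx f) := by
  have hd : Differentiable ℝ (fun p : ℝ × ℝ => f p.1 p.2) := hf.differentiable (by norm_num)
  have hx : Differentiable ℝ (fun p : ℝ × ℝ => pdx f p.1 p.2) :=
    (kbk_cx (m := 1) hf (by norm_num)).differentiable (by norm_num)
  have hy : Differentiable ℝ (fun p : ℝ × ℝ => pdy f p.1 p.2) :=
    (kbk_cy (m := 1) hf (by norm_num)).differentiable (by norm_num)
  have hF : Differentiable ℝ (fderiv ℝ (fun p : ℝ × ℝ => f p.1 p.2)) :=
    (hf.fderiv_right (m := 1) (by norm_num)).differentiable (by norm_num)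
  funext x y
  have e1 : pdx (pdy f) x y = _ := (kbk_hx hy x y).deriv
  have e2 : pdy (pdx f) x y = _ := (kbk_hy hx x y).deriv
  rw [e1, e2, kbk_pdx_eq hd, kbk_pdy_eq hd, fderiv_clm_apply (hF _) (by fun_prop),
    fderiv_clm_apply (hF _) (by fun_prop)]
  have hs : IsSymmSndFDerivAt ℝ (fun p : ℝ × ℝ => f p.1 p.2) (x, y) :=
    (hf.contDiffAt).isSymmSndFDerivAt (by simp)
  simpa using hs (1, 0) (0, 1)

lemma kbk_addx {f g : ℝ → ℝ → ℝ} (hf : Differentiable ℝ (fun p : ℝ × ℝ => f p.1 p.2))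
    (hg : Differentiable ℝ (fun p : ℝ × ℝ => g p.1 p.2)) :
    pdx (fun a b => f a b + g a b) = fun a b => pdx f a b + pdx g a b := by
  funext x y
  exact deriv_fun_add (kbk_hx hf x y).differentiableAt (kbk_hx hg x y).differentiableAt

lemma kbk_addy {f g : ℝ → ℝ → ℝ} (hf : Differentiable ℝ (fun p : ℝ × ℝ => f p.1 p.2))
    (hg : Differentiable ℝ (fun p : ℝ × ℝ => g p.1 p.2)) :
    pdy (fun a b => f a b + g a b) = fun a b => pdy f a b + pdy g a b := by
  funext x y
  exact deriv_fun_add (kbk_hy hf x y).differentiableAt (kbk_hy hg x y).differentiableAt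

lemma kbk_smulx (c : ℝ) (f : ℝ → ℝ → ℝ) (x y : ℝ) :
    pdx (fun a b => c * f a b) x y = c * pdx f x y := by
  simp [pdx]

lemma kbk_smuly (c : ℝ) (f : ℝ → ℝ → ℝ) (x y : ℝ) :
    pdy (fun a b => c * f a b) x y = c * pdy f x y := by
  simp [pdy]

/-- A `C³` solution of the vector bound-state equation `−εΔv + v − (ε²/2)|v|²v = 0` on `ℝ²`,
together with `η = −(ε/2)|v|²`, gives a stationary solution of the 2D good KBK system
(the vector field `v` is given by its components `v1, v2`). -/
theorem stmt_17 (ε : ℝ) (hε : 0 < ε) (v1 v2 η : ℝ → ℝ → ℝ)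
    (hv1 : ContDiff ℝ 3 (fun p : ℝ × ℝ => v1 p.1 p.2))
    (hv2 : ContDiff ℝ 3 (fun p : ℝ × ℝ => v2 p.1 p.2))
    (heq1 : ∀ x y : ℝ, -ε * lap v1 x y + v1 x y
      - (ε ^ 2 / 2) * ((v1 x y) ^ 2 + (v2 x y) ^ 2) * v1 x y = 0)
    (heq2 : ∀ x y : ℝ, -ε * lap v2 x y + v2 x y
      - (ε ^ 2 / 2) * ((v1 x y) ^ 2 + (v2 x y) ^ 2) * v2 x y = 0)
    (hη : ∀ x y : ℝ, η x y = -(ε / 2) * ((v1 x y) ^ 2 + (v2 x y) ^ 2)) :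
    -- ∇·v + ε ∇·(η v) − ε ∇·(Δv) = 0
    (∀ x y : ℝ,
      (pdx v1 x y + pdy v2 x y)
        + ε * (pdx (fun a b => η a b * v1 a b) x y + pdy (fun a b => η a b * v2 a b) x y)
        - ε * (pdx (lap v1) x y + pdy (lap v2) x y) = 0) ∧
    -- ∇η + (ε/2)∇(|v|²) = 0
    (∀ x y : ℝ,
      pdx η x y + (ε / 2) * pdx (fun a b => (v1 a b) ^ 2 + (v2 a b) ^ 2) x y = 0 ∧
      pdy η x y + (ε / 2) * pdy (fun a b => (v1 a b) ^ 2 + (v2 a b) ^ 2) x y = 0) ∧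
    -- stationary solution of the 2D good KBK system: ∇·v + ε ∇·(ηv) − ε Δ(∇·v) = 0
    (∀ x y : ℝ,
      (pdx v1 x y + pdy v2 x y)
        + ε * (pdx (fun a b => η a b * v1 a b) x y + pdy (fun a b => η a b * v2 a b) x y)
        - ε * lap (fun a b => pdx v1 a b + pdy v2 a b) x y = 0) := by
  have n3 : (3 : WithTop ℕ∞) ≠ 0 := by norm_num
  have n2 : (2 : WithTop ℕ∞) ≠ 0 := by norm_num
  have n1 : (1 : WithTop ℕ∞) ≠ 0 := by norm_num
  have l3 : (2 : WithTop ℕ∞) + 1 ≤ 3 := by norm_num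
  have l2 : (1 : WithTop ℕ∞) + 1 ≤ 2 := by norm_num
  have hηf : η = fun a b => -(ε / 2) * ((v1 a b) ^ 2 + (v2 a b) ^ 2) := by
    funext a b; exact hη a b
  have hηd : ContDiff ℝ 3 (fun p : ℝ × ℝ => η p.1 p.2) := by
    rw [hηf]; fun_prop
  have d1 := hv1.differentiable n3
  have d2 := hv2.differentiable n3
  have p1 : Differentiable ℝ (fun p : ℝ × ℝ => (fun a b => η a b * v1 a b) p.1 p.2) :=
    (hηd.mul hv1).differentiable n3
  have p2 : Differentiable ℝ (fun p : ℝ × ℝ => (fun a b => η a b * v2 a b) p.1 p.2) :=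
    (hηd.mul hv2).differentiable n3
  have q1 : (fun a b => ε * lap v1 a b) = fun a b => v1 a b + ε * (η a b * v1 a b) := by
    funext a b; rw [hη]; linear_combination -heq1 a b
  have q2 : (fun a b => ε * lap v2 a b) = fun a b => v2 a b + ε * (η a b * v2 a b) := by
    funext a b; rw [hη]; linear_combination -heq2 a b
  have A : ∀ x y : ℝ,
      (pdx v1 x y + pdy v2 x y)
        + ε * (pdx (fun a b => η a b * v1 a b) x y + pdy (fun a b => η a b * v2 a b) x y)
        - ε * (pdx (lap v1) x y + pdy (lap v2) x y) = 0 := by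
    intro x y
    have r1 : ε * pdx (lap v1) x y = pdx v1 x y + ε * pdx (fun a b => η a b * v1 a b) x y := by
      rw [← kbk_smulx, q1, ← kbk_smulx]
      exact congrFun (congrFun (kbk_addx (g := fun a b => ε * (η a b * v1 a b)) d1
        (p1.const_mul ε)) x) y
    have r2 : ε * pdy (lap v2) x y = pdy v2 x y + ε * pdy (fun a b => η a b * v2 a b) x y := by
      rw [← kbk_smuly, q2, ← kbk_smuly]
      exact congrFun (congrFun (kbk_addy (g := fun a b => ε * (η a b * v2 a b)) d2
        (p2.const_mul ε)) x) y
    linear_combination -r1 - r2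
  refine ⟨A, fun x y => ?_, fun x y => ?_⟩
  · rw [hηf, kbk_smulx, kbk_smuly]
    constructor <;> ring
  · rw [← A x y]
    have cx1 := kbk_cx hv1 l3
    have cy1 := kbk_cy hv1 l3
    have cx2 := kbk_cx hv2 l3
    have cy2 := kbk_cy hv2 l3
    have cxx1 := (kbk_cx cx1 l2).differentiable n1
    have cyx1 := (kbk_cy cx1 l2).differentiable n1
    have cyy1 := (kbk_cy cy1 l2).differentiable n1
    have cxx2 := (kbk_cx cx2 l2).differentiable n1
    have cxy2 := (kbk_cx cy2 l2).differentiable n1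
    have cyy2 := (kbk_cy cy2 l2).differentiable n1
    have hl2 : (2 : WithTop ℕ∞) ≤ 3 := by norm_num
    have s1 : pdx (pdy (pdy v1)) = pdy (pdy (pdx v1)) := by
      rw [kbk_swap cy1, kbk_swap (hv1.of_le hl2)]
    have s2 : pdy (pdx (pdx v2)) = pdx (pdx (pdy v2)) := by
      rw [← kbk_swap cx2, ← kbk_swap (hv2.of_le hl2)]
    have e1 : pdx (lap v1) x y = pdx (pdx (pdx v1)) x y + pdx (pdy (pdy v1)) x y :=
      congrFun (congrFun (kbk_addx cxx1 cyy1) x) y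
    have e2 : pdy (lap v2) x y = pdy (pdx (pdx v2)) x y + pdy (pdy (pdy v2)) x y :=
      congrFun (congrFun (kbk_addy cxx2 cyy2) x) y
    have e3 : lap (fun a b => pdx v1 a b + pdy v2 a b) x y
        = (pdx (pdx (pdx v1)) x y + pdx (pdx (pdy v2)) x y)
          + (pdy (pdy (pdx v1)) x y + pdy (pdy (pdy v2)) x y) := by
      unfold lap
      rw [kbk_addx (cx1.differentiable n2) (cy2.differentiable n2),
        kbk_addy (cx1.differentiable n2) (cy2.differentiable n2),
        kbk_addx cxx1 cxy2, kbk_addy cyx1 ((kbk_cy cy2 l2).differentiable n1)]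
    rw [e1, e2, e3, s1, s2]
    ring
end

section
/- Let (η, v) be a smooth real solution on ℝ×ℝ of the good Kaup–Broer–Kupershmidt system ∂_t η + ∂_x v + ∂_x(η v) − ∂_x³ v = 0, ∂_t v + ∂_x η + v ∂_x v = 0. Define the complex-valued functions ρ_n and j_n for n ≥ 1 by: ρ₁ = (1/2)η + (i/2)∂_x v; ρ₂ = i v ρ₁ − 2 ∂_x ρ₁ + (i/2) v; ρ_{n+1} = i v ρ_n − ρ_{n−1} − 2 ∂_x ρ_n − 2 Σ_{k=1}^{n−1} ρ_k ρ_{n−k} for n ≥ 2; j₁ = (1/4) v + (1/2) v ρ₁ − (i/2) ρ₂; j_n = (1/2) v ρ_n − (i/2) ρ_{n+1} + (i/2) ρ_{n−1} for n ≥ 2. Then for every n ≥ 1 the local conservation law ∂_t ρ_n + ∂_x j_n = 0 holds on ℝ×ℝ. -/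
open Finset in
theorem kbk_sumsym {A : Type*} [CommRing A] [Algebra ℂ A] (D : Derivation ℂ A A) (a : ℕ → A) (m : ℕ) :
    D (∑ p ∈ antidiagonal m, a p.1 * a p.2) = 2 * ∑ p ∈ antidiagonal m, a p.1 * D (a p.2) := by
  rw [map_sum]
  simp only [Derivation.leibniz, smul_eq_mul, Finset.sum_add_distrib]
  rw [← Finset.Nat.sum_antidiagonal_swap (f := fun p : ℕ × ℕ => a p.2 * D (a p.1))]
  simp only [Prod.fst_swap, Prod.snd_swap]
  ring

theorem kbk_Dtwo {A : Type*} [CommRing A] [Algebra ℂ A] (D : Derivation ℂ A A) : D (2 : A) = 0 := by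
  have := D.map_natCast 2
  simpa using this

theorem kbk_step {A : Type*} [CommRing A] [Algebra ℂ A] (D T : Derivation ℂ A A)
    (hTD : ∀ f, T (D f) = D (T f)) (c h v η u w z u_a u_b r1 S S_a S_b : A)
    (hc : c * c = -1) (hh : 2 * h = 1) (hDc : D c = 0) (hTc : T c = 0) (hDh : D h = 0)
    (hv : T v = -D η - v * D v)
    (hr1 : r1 = h * η + h * c * D v)
    (hu_a : u_a = c * v * u - w - 2 * D u - 2 * S)
    (hz : z = c * v * w - u - 2 * D w - 2 * S_a)
    (hu_b : u_b = c * v * u_a - u - 2 * D u_a - 2 * S_b)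
    (hTu : T u = - D (h * v * u - h * c * u_a + h * c * w))
    (hTw : T w = - D (h * v * w - h * c * u + h * c * z))
    (hTS : T S = - h * (2 * D v * S + v * D S - 2 * c * (h * D S_b - u * D r1)
      + 2 * c * (h * D S_a) + w * D v)) :
    T u_a = - D (h * v * u_a - h * c * u_b + h * c * u) := by
  have hh_a : h * 2 = 1 := by rw [mul_comm]; exact hh
  have e0 : T u_a = c * T v * u + c * v * T u - T w - 2 * D (T u) - 2 * T S := by
    rw [hu_a]
    simp only [map_sub, Derivation.leibniz, smul_eq_mul, hTc, kbk_Dtwo, hTD]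
    ring
  rw [e0, hTS, hTw, hTu, hv, hu_b, hz, hr1, hu_a]
  simp only [map_add, map_sub, map_neg, Derivation.leibniz, smul_eq_mul, hDc, hDh, kbk_Dtwo, mul_zero, add_zero]
  generalize D (D (D u)) = u3
  generalize D (D (D w)) = w3
  generalize D (D (D v)) = v3
  generalize D (D u) = u2
  generalize D (D v) = v2
  generalize D (D w) = w2
  generalize D (D S) = S2
  generalize D (D S_a) = S2_a
  generalize D (D S_b) = S2_b
  generalize D (D η) = η2
  generalize D u = u1
  generalize D v = v1
  generalize D w = w1
  generalize D S = S1
  generalize D S_a = S1_a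
  generalize D S_b = S1_b
  generalize D η = η1
  clear hTS hTw hTu e0 hz hu_b hu_a hr1 hv hTD hDc hTc hDh
  grind

/-- The quadratic sums in the recursion, with shifted indices. -/
def kbkQ {A : Type*} [CommRing A] (r : ℕ → A) : ℕ → A
  | 0 => 0
  | m + 1 => ∑ p ∈ Finset.HasAntidiagonal.antidiagonal m, r (p.1 + 1) * r (p.2 + 1)

theorem kbk_TQ {A : Type*} [CommRing A] [Algebra ℂ A] (D T : Derivation ℂ A A)
    (c h v : A) (r : ℕ → A)
    (hc : c * c = -1) (hh : 2 * h = 1) (hDc : D c = 0) (hDh : D h = 0)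
    (h0 : r 0 = - h * c * v) (m : ℕ)
    (ih : ∀ k ≤ m, T (r (k + 1)) = - D (h * v * r (k + 1) - h * c * r (k + 2) + h * c * r k)) :
    T (kbkQ r (m + 1)) = - h * (2 * D v * kbkQ r (m + 1) + v * D (kbkQ r (m + 1))
      - 2 * c * (h * D (kbkQ r (m + 2)) - r (m + 2) * D (r 1))
      + 2 * c * (h * D (kbkQ r m)) + r (m + 1) * D v) := by
  have s1 := kbk_sumsym D (fun k => r (k + 1)) m
  have s2 := kbk_sumsym D (fun k => r (k + 1)) (m + 1)
  have s3 := kbk_sumsym T (fun k => r (k + 1)) m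
  have e2 : ∑ p ∈ Finset.HasAntidiagonal.antidiagonal (m + 1), r (p.1 + 1) * D (r (p.2 + 1))
      = r (m + 2) * D (r 1) + ∑ p ∈ Finset.HasAntidiagonal.antidiagonal m, r (p.1 + 1) * D (r (p.2 + 2)) := by
    rw [Finset.Nat.sum_antidiagonal_succ']
  have e3 : ∑ p ∈ Finset.HasAntidiagonal.antidiagonal m, r (p.1 + 1) * D (r p.2)
      = r (m + 1) * D (r 0) + h * D (kbkQ r m) := by
    cases m with
    | zero => simp [kbkQ]
    | succ l =>
      have s4 := kbk_sumsym D (fun k => r (k + 1)) l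
      rw [Finset.Nat.sum_antidiagonal_succ']
      simp only [kbkQ] at s4 ⊢
      rw [s4]
      linear_combination (- ∑ p ∈ Finset.HasAntidiagonal.antidiagonal l, r (p.1 + 1) * D (r (p.2 + 1))) * hh
  have e4 : ∑ p ∈ Finset.HasAntidiagonal.antidiagonal m, r (p.1 + 1) * T (r (p.2 + 1))
      = - h * (D v * ∑ p ∈ Finset.HasAntidiagonal.antidiagonal m, r (p.1 + 1) * r (p.2 + 1)
        + v * ∑ p ∈ Finset.HasAntidiagonal.antidiagonal m, r (p.1 + 1) * D (r (p.2 + 1))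
        - c * ∑ p ∈ Finset.HasAntidiagonal.antidiagonal m, r (p.1 + 1) * D (r (p.2 + 2))
        + c * ∑ p ∈ Finset.HasAntidiagonal.antidiagonal m, r (p.1 + 1) * D (r p.2)) := by
    simp only [Finset.mul_sum, ← Finset.sum_add_distrib, ← Finset.sum_sub_distrib]
    refine Finset.sum_congr rfl fun p hp => ?_
    have hp2 : p.2 ≤ m := by have := Finset.HasAntidiagonal.mem_antidiagonal.1 hp; omega
    rw [ih _ hp2]
    simp only [map_add, map_sub, Derivation.leibniz, smul_eq_mul, hDc, hDh]
    ring
  have e5 : D (r 0) = - h * c * D v := by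
    rw [h0]
    simp only [map_neg, Derivation.leibniz, smul_eq_mul, hDc, hDh]
    ring
  rw [e5] at e3
  simp only [kbkQ] at e3 ⊢
  rw [s3, e4, e3]
  rw [e2] at s2
  rw [s1, s2]
  generalize (∑ p ∈ Finset.HasAntidiagonal.antidiagonal m, r (p.1 + 1) * D (r (p.2 + 1))) = X1
  generalize (∑ p ∈ Finset.HasAntidiagonal.antidiagonal m, r (p.1 + 1) * D (r (p.2 + 2))) = X2
  generalize (∑ p ∈ Finset.HasAntidiagonal.antidiagonal m, r (p.1 + 1) * r (p.2 + 1)) = X3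
  generalize D (kbkQ r m) = X4
  generalize D (r 1) = X5
  generalize D v = X6
  clear s1 s2 s3 e2 e3 e4 e5 ih h0 hDc hDh
  grind

theorem kbk_alg {A : Type*} [CommRing A] [Algebra ℂ A] (D T : Derivation ℂ A A)
    (hTD : ∀ f, T (D f) = D (T f)) (c h v η : A) (r : ℕ → A)
    (hc : c * c = -1) (hh : 2 * h = 1) (hDc : D c = 0) (hTc : T c = 0) (hDh : D h = 0)
    (hTh : T h = 0)
    (hη : T η = - D v - D (η * v) + D (D (D v)))
    (hv : T v = -D η - v * D v)
    (h0 : r 0 = - h * c * v) (h1 : r 1 = h * η + h * c * D v)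
    (hrec : ∀ n, r (n + 2) = c * v * r (n + 1) - r n - 2 * D (r (n + 1)) - 2 * kbkQ r n) :
    ∀ n, T (r (n + 1)) = - D (h * v * r (n + 1) - h * c * r (n + 2) + h * c * r n) := by
  have base : T (r 1) = - D (h * v * r 1 - h * c * r 2 + h * c * r 0) := by
    have h2 := hrec 0
    simp only [zero_add, kbkQ] at h2
    rw [h2, h0, h1]
    simp only [map_add, map_sub, map_neg, map_zero, Derivation.leibniz, smul_eq_mul, hDc, hDh,
      hTc, hTh, kbk_Dtwo, mul_zero, add_zero, hTD, hη, hv]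
    clear hTD hη hv h2 h0 h1 hrec hDc hTc hDh hTh
    grind
  intro n
  induction n using Nat.strong_induction_on with
  | _ n ih =>
    match n with
    | 0 => exact base
    | 1 =>
      have h2 := hrec 0
      have h3 := hrec 1
      simp only [zero_add, kbkQ, Finset.Nat.antidiagonal_zero, Finset.sum_singleton, Nat.reduceAdd] at h2 h3 ⊢
      have e0 : T (r 2) = c * T v * r 1 + c * v * T (r 1) - T (r 0) - 2 * D (T (r 1)) := by
        rw [h2]
        simp only [map_sub, map_zero, Derivation.leibniz, smul_eq_mul, hTc, kbk_Dtwo, hTD]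
        ring
      rw [e0, base, h3, h2, h0, h1]
      simp only [map_add, map_sub, map_neg, map_zero, Derivation.leibniz, smul_eq_mul, hDc, hDh,
        hTc, hTh, kbk_Dtwo, mul_zero, add_zero, hv]
      clear hTD hη hv h2 h0 h1 hrec hDc hTc hDh hTh e0 h3 base ih
      grind
    | m + 2 =>
      refine kbk_step D T hTD c h v η (r (m + 2)) (r (m + 1)) (r m) (r (m + 3)) (r (m + 4)) (r 1)
        (kbkQ r (m + 1)) (kbkQ r m) (kbkQ r (m + 2)) hc hh hDc hTc hDh hv h1 (hrec (m + 1)) ?_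
        (hrec (m + 2)) (ih (m + 1) (by omega)) (ih m (by omega)) ?_
      · linear_combination hrec m
      · exact kbk_TQ D T c h v r hc hh hDc hDh h0 m (fun k hk => ih k (by omega))

/-- Smooth complex-valued functions on the plane. -/
def kbkSm : Subalgebra ℂ (ℝ × ℝ → ℂ) where
  carrier := {f | ContDiff ℝ (⊤ : ℕ∞) f}
  mul_mem' := by
    intro a b ha hb
    exact ContDiff.mul (Set.mem_ofPred_eq ▸ ha) (Set.mem_ofPred_eq ▸ hb)
  add_mem' := by
    intro a b ha hb
    exact ContDiff.add (Set.mem_ofPred_eq ▸ ha) (Set.mem_ofPred_eq ▸ hb)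
  algebraMap_mem' := by
    intro c
    exact (contDiff_const : ContDiff ℝ (⊤ : ℕ∞) (fun _ : ℝ × ℝ => c))

theorem kbk_sm (f : kbkSm) : ContDiff ℝ (⊤ : ℕ∞) f.1 := f.2

theorem kbk_fderiv_smooth {f : ℝ × ℝ → ℂ} (hf : ContDiff ℝ (⊤ : ℕ∞) f) (e : ℝ × ℝ) :
    ContDiff ℝ (⊤ : ℕ∞) (fun p => fderiv ℝ f p e) :=
  (hf.fderiv_right (m := (⊤ : ℕ∞)) (by simp)).clm_apply contDiff_const

theorem kbk_diff {f : ℝ × ℝ → ℂ} (hf : ContDiff ℝ (⊤ : ℕ∞) f) : Differentiable ℝ f :=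
  hf.differentiable (by simp)

/-- Directional derivative as a derivation. -/
noncomputable def kbkD (e : ℝ × ℝ) : Derivation ℂ kbkSm kbkSm :=
  Derivation.mk'
    { toFun := fun f => ⟨fun p => fderiv ℝ f.1 p e, kbk_fderiv_smooth f.2 e⟩
      map_add' := by
        intro f g
        ext p
        have hf := kbk_diff f.2 p
        have hg := kbk_diff g.2 p
        change fderiv ℝ (f.1 + g.1) p e = fderiv ℝ f.1 p e + fderiv ℝ g.1 p e
        rw [fderiv_add hf hg]
        rfl
      map_smul' := by
        intro c f
        ext p
        have hf := kbk_diff f.2 p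
        change fderiv ℝ (c • f.1) p e = c • fderiv ℝ f.1 p e
        rw [fderiv_const_smul hf]
        rfl }
    (by
      intro f g
      ext p
      have hf := kbk_diff f.2 p
      have hg := kbk_diff g.2 p
      change fderiv ℝ (f.1 * g.1) p e = f.1 p * fderiv ℝ g.1 p e + g.1 p * fderiv ℝ f.1 p e
      rw [fderiv_mul hf hg]
      rfl)

theorem kbkD_apply (e : ℝ × ℝ) (f : kbkSm) (p : ℝ × ℝ) :
    (kbkD e f).1 p = fderiv ℝ f.1 p e := rfl

theorem kbkD_comm (e e_a : ℝ × ℝ) (f : kbkSm) : kbkD e (kbkD e_a f) = kbkD e_a (kbkD e f) := by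
  ext p
  have hd : DifferentiableAt ℝ (fderiv ℝ f.1) p :=
    ((kbk_sm f).fderiv_right (m := (⊤ : ℕ∞)) (by simp)).differentiable (by simp) p
  have key : ∀ a b : ℝ × ℝ, fderiv ℝ (fun q => fderiv ℝ f.1 q b) p a
      = fderiv ℝ (fderiv ℝ f.1) p a b := by
    intro a b
    rw [fderiv_clm_apply hd (differentiableAt_const b)]
    simp
  change fderiv ℝ (fun q => fderiv ℝ f.1 q e_a) p e = fderiv ℝ (fun q => fderiv ℝ f.1 q e) p e_a
  rw [key, key]
  have hs : ContDiffAt ℝ (⊤ : ℕ∞) f.1 p := (kbk_sm f).contDiffAt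
  exact (hs.isSymmSndFDerivAt (by simp; exact WithTop.coe_le_coe.2 le_top)).eq e e_a

theorem kbk_bx (f : ℝ × ℝ → ℂ) (hf : ContDiff ℝ (⊤ : ℕ∞) f) (x t : ℝ) :
    HasDerivAt (fun y => f (y, t)) (fderiv ℝ f (x, t) (1, 0)) x :=
  (kbk_diff hf (x, t)).hasFDerivAt.comp_hasDerivAt x
    ((hasDerivAt_id x).prodMk (hasDerivAt_const x t))

theorem kbk_bt (f : ℝ × ℝ → ℂ) (hf : ContDiff ℝ (⊤ : ℕ∞) f) (x t : ℝ) :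
    HasDerivAt (fun s => f (x, s)) (fderiv ℝ f (x, t) (0, 1)) t :=
  (kbk_diff hf (x, t)).hasFDerivAt.comp_hasDerivAt t
    ((hasDerivAt_const t x).prodMk (hasDerivAt_id t))

theorem kbk_dx (f : kbkSm) (x t : ℝ) :
    deriv (fun y => f.1 (y, t)) x = (kbkD (1, 0) f).1 (x, t) := (kbk_bx f.1 f.2 x t).deriv

theorem kbk_dt (f : kbkSm) (x t : ℝ) :
    deriv (fun s => f.1 (x, s)) t = (kbkD (0, 1) f).1 (x, t) := (kbk_bt f.1 f.2 x t).deriv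

/-- For real functions whose complexification is smooth. -/
theorem kbk_ofReal_deriv (g : ℝ → ℝ) (x : ℝ) :
    ((deriv g x : ℝ) : ℂ) = deriv (fun y => (g y : ℂ)) x := by
  by_cases h : DifferentiableAt ℝ g x
  · exact (h.hasDerivAt.ofReal_comp.deriv).symm
  · rw [deriv_zero_of_not_differentiableAt h, deriv_zero_of_not_differentiableAt]
    · simp
    · intro h_a
      apply h
      have := Complex.reCLM.differentiableAt.comp x h_a
      exact this



/-- The infinite family of complex local conservation laws `∂_t ρ_n + ∂_x j_n = 0` for smooth
solutions of the good Kaup–Broer–Kupershmidt system, where the densities `ρ_n` and currents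
`j_n` are defined by the recursion of Nabelek–Ablowitz–Fokas. -/
theorem stmt_18 (η v : ℝ → ℝ → ℝ)
    (hη : ContDiff ℝ (⊤ : ℕ∞) (fun p : ℝ × ℝ => η p.1 p.2))
    (hv : ContDiff ℝ (⊤ : ℕ∞) (fun p : ℝ × ℝ => v p.1 p.2))
    (heq1 : ∀ x t : ℝ,
      deriv (fun s => η x s) t + deriv (fun y => v y t) x
        + deriv (fun y => η y t * v y t) x - iteratedDeriv 3 (fun y => v y t) x = 0)
    (heq2 : ∀ x t : ℝ,
      deriv (fun s => v x s) t + deriv (fun y => η y t) x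
        + v x t * deriv (fun y => v y t) x = 0)
    (ρ j : ℕ → ℝ → ℝ → ℂ)
    (hρ1 : ∀ x t : ℝ,
      ρ 1 x t = (1 / 2) * (η x t : ℂ) + (Complex.I / 2) * (deriv (fun y => v y t) x : ℂ))
    (hρ2 : ∀ x t : ℝ,
      ρ 2 x t = Complex.I * (v x t : ℂ) * ρ 1 x t - 2 * deriv (fun y => ρ 1 y t) x
        + (Complex.I / 2) * (v x t : ℂ))
    (hρrec : ∀ n : ℕ, 2 ≤ n → ∀ x t : ℝ,
      ρ (n + 1) x t = Complex.I * (v x t : ℂ) * ρ n x t - ρ (n - 1) x t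
        - 2 * deriv (fun y => ρ n y t) x
        - 2 * ∑ k ∈ Finset.Icc 1 (n - 1), ρ k x t * ρ (n - k) x t)
    (hj1 : ∀ x t : ℝ,
      j 1 x t = (1 / 4) * (v x t : ℂ) + (1 / 2) * (v x t : ℂ) * ρ 1 x t
        - (Complex.I / 2) * ρ 2 x t)
    (hjn : ∀ n : ℕ, 2 ≤ n → ∀ x t : ℝ,
      j n x t = (1 / 2) * (v x t : ℂ) * ρ n x t - (Complex.I / 2) * ρ (n + 1) x t
        + (Complex.I / 2) * ρ (n - 1) x t) :
    ∀ n : ℕ, 1 ≤ n → ∀ x t : ℝ,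
      deriv (fun s => ρ n x s) t + deriv (fun y => j n y t) x = 0 := by
  have sV : ContDiff ℝ (⊤ : ℕ∞) (fun p : ℝ × ℝ => (v p.1 p.2 : ℂ)) :=
    Complex.ofRealCLM.contDiff.comp hv
  have sE : ContDiff ℝ (⊤ : ℕ∞) (fun p : ℝ × ℝ => (η p.1 p.2 : ℂ)) :=
    Complex.ofRealCLM.contDiff.comp hη
  let V : kbkSm := ⟨fun p => (v p.1 p.2 : ℂ), sV⟩
  let E : kbkSm := ⟨fun p => (η p.1 p.2 : ℂ), sE⟩
  let c : kbkSm := algebraMap ℂ kbkSm Complex.I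
  let h : kbkSm := algebraMap ℂ kbkSm (1 / 2)
  let D := kbkD (1, 0)
  let T := kbkD (0, 1)
  have dV : ∀ x t : ℝ, deriv (fun y => (v y t : ℂ)) x = (D V).1 (x, t) := fun x t => kbk_dx V x t
  have dDV : ∀ x t : ℝ, deriv (fun y => (D V).1 (y, t)) x = (D (D V)).1 (x, t) :=
    fun x t => kbk_dx (D V) x t
  have dDDV : ∀ x t : ℝ, deriv (fun y => (D (D V)).1 (y, t)) x = (D (D (D V))).1 (x, t) :=
    fun x t => kbk_dx (D (D V)) x t
  have dE : ∀ x t : ℝ, deriv (fun y => (η y t : ℂ)) x = (D E).1 (x, t) := fun x t => kbk_dx E x t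
  have dEV : ∀ x t : ℝ, deriv (fun y => (η y t : ℂ) * (v y t : ℂ)) x = (D (E * V)).1 (x, t) :=
    fun x t => kbk_dx (E * V) x t
  have tV : ∀ x t : ℝ, deriv (fun s => (v x s : ℂ)) t = (T V).1 (x, t) := fun x t => kbk_dt V x t
  have tE : ∀ x t : ℝ, deriv (fun s => (η x s : ℂ)) t = (T E).1 (x, t) := fun x t => kbk_dt E x t
  have hTV : T V = - D E - V * D V := by
    ext ⟨x, t⟩
    have e := congrArg (fun z : ℝ => (z : ℂ)) (heq2 x t)
    simp only [Complex.ofReal_add, Complex.ofReal_mul, Complex.ofReal_zero, kbk_ofReal_deriv,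
      tV, dE, dV] at e
    change (T V).1 (x, t) = - (D E).1 (x, t) - (v x t : ℂ) * (D V).1 (x, t)
    linear_combination e
  have hTE : T E = - D V - D (E * V) + D (D (D V)) := by
    ext ⟨x, t⟩
    have e := congrArg (fun z : ℝ => (z : ℂ)) (heq1 x t)
    simp only [iteratedDeriv_succ, iteratedDeriv_zero, Complex.ofReal_add, Complex.ofReal_sub,
      Complex.ofReal_mul, Complex.ofReal_zero, kbk_ofReal_deriv,
      tE, dEV, dV, dDV, dDDV] at e
    change (T E).1 (x, t) = - (D V).1 (x, t) - (D (E * V)).1 (x, t) + (D (D (D V))).1 (x, t)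
    linear_combination e
  -- smoothness of the densities
  have smooth : ∀ n, ContDiff ℝ (⊤ : ℕ∞) (fun p : ℝ × ℝ => ρ (n + 1) p.1 p.2) := by
    intro n
    induction n using Nat.strong_induction_on with
    | _ n ih =>
      have dr : ∀ k (hk : k < n) (x t : ℝ), deriv (fun y => ρ (k + 1) y t) x
          = (D ⟨_, ih k hk⟩).1 (x, t) := fun k hk x t => kbk_dx ⟨_, ih k hk⟩ x t
      match n with
      | 0 =>
        have : (fun p : ℝ × ℝ => ρ (0 + 1) p.1 p.2)
            = fun p => (1 / 2) * (η p.1 p.2 : ℂ) + (Complex.I / 2) * (D V).1 p := by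
          funext p
          rw [zero_add, hρ1, dV]
        rw [this]
        exact (contDiff_const.mul sE).add (contDiff_const.mul (kbk_sm (D V)))
      | 1 =>
        have : (fun p : ℝ × ℝ => ρ (1 + 1) p.1 p.2)
            = fun p => Complex.I * (v p.1 p.2 : ℂ) * ρ (0 + 1) p.1 p.2
              - 2 * (D ⟨_, ih 0 (by omega)⟩).1 p + (Complex.I / 2) * (v p.1 p.2 : ℂ) := by
          funext p
          have := dr 0 (by omega) p.1 p.2
          simp only [zero_add] at this
          rw [one_add_one_eq_two, hρ2, this]
        rw [this]
        exact (((contDiff_const.mul sV).mul (ih 0 (by omega))).sub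
          (contDiff_const.mul (kbk_sm _))).add (contDiff_const.mul sV)
      | m + 2 =>
        have : (fun p : ℝ × ℝ => ρ (m + 2 + 1) p.1 p.2)
            = fun p => Complex.I * (v p.1 p.2 : ℂ) * ρ (m + 1 + 1) p.1 p.2
              - ρ (m + 1) p.1 p.2
              - 2 * (D ⟨_, ih (m + 1) (by omega)⟩).1 p
              - 2 * ∑ k ∈ Finset.Icc 1 (m + 1), ρ k p.1 p.2 * ρ (m + 2 - k) p.1 p.2 := by
          funext p
          rw [hρrec (m + 2) (by omega), show m + 2 - 1 = m + 1 by omega,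
            dr (m + 1) (by omega) p.1 p.2]
        rw [this]
        refine ((((contDiff_const.mul sV).mul (ih (m + 1) (by omega))).sub (ih m (by omega))).sub
          (contDiff_const.mul (kbk_sm _))).sub (contDiff_const.mul (ContDiff.sum ?_))
        intro k hk
        rw [Finset.mem_Icc] at hk
        have h1 := ih (k - 1) (by omega)
        have h2 := ih (m + 1 - k) (by omega)
        rw [show k - 1 + 1 = k by omega] at h1
        rw [show m + 1 - k + 1 = m + 2 - k by omega] at h2
        exact h1.mul h2
  let r : ℕ → kbkSm := fun n => Nat.casesOn n (- h * c * V) (fun k => ⟨_, smooth k⟩)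
  have rv : ∀ n (x t : ℝ), (r (n + 1)).1 (x, t) = ρ (n + 1) x t := fun _ _ _ => rfl
  have dr : ∀ n (x t : ℝ), deriv (fun y => ρ (n + 1) y t) x = (D (r (n + 1))).1 (x, t) :=
    fun n x t => kbk_dx (r (n + 1)) x t
  have h1 : r 1 = h * E + h * c * D V := by
    ext ⟨x, t⟩
    change ρ 1 x t = (1 / 2) * (η x t : ℂ) + (1 / 2) * Complex.I * (D V).1 (x, t)
    rw [hρ1, dV]
    ring
  have hrec : ∀ n, r (n + 2) = c * V * r (n + 1) - r n - 2 * D (r (n + 1)) - 2 * kbkQ r n := by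
    intro n
    ext ⟨x, t⟩
    match n with
    | 0 =>
      change ρ 2 x t = Complex.I * (v x t : ℂ) * ρ 1 x t - (- (1 / 2)) * Complex.I * (v x t : ℂ)
        - 2 * (D (r 1)).1 (x, t) - 2 * 0
      have := dr 0 x t
      simp only [zero_add] at this
      rw [hρ2, this]
      ring
    | m + 1 =>
      have hQ : (kbkQ r (m + 1)).1 (x, t)
          = ∑ k ∈ Finset.Icc 1 (m + 1), ρ k x t * ρ (m + 2 - k) x t := by
        let ev : kbkSm →+ ℂ :=
          { toFun := fun f => f.1 (x, t), map_zero' := rfl, map_add' := fun _ _ => rfl }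
        change ev (kbkQ r (m + 1)) = _
        simp only [kbkQ]
        rw [map_sum]
        change ∑ p ∈ Finset.HasAntidiagonal.antidiagonal m, ρ (p.1 + 1) x t * ρ (p.2 + 1) x t = _
        rw [Finset.Nat.sum_antidiagonal_eq_sum_range_succ
          (fun i j => ρ (i + 1) x t * ρ (j + 1) x t)]
        rw [← Finset.Ico_add_one_right_eq_Icc, Finset.sum_Ico_eq_sum_range]
        refine Finset.sum_congr (by simp) fun k hk => ?_
        have : k < m + 1 := by simpa using hk
        rw [add_comm k 1, show m + 2 - (1 + k) = m - k + 1 by omega]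
      change ρ (m + 2 + 1) x t = Complex.I * (v x t : ℂ) * ρ (m + 2) x t - ρ (m + 1) x t
        - 2 * (D (r (m + 1 + 1))).1 (x, t) - 2 * (kbkQ r (m + 1)).1 (x, t)
      rw [hρrec (m + 2) (by omega), hQ, ← dr, show m + 2 - 1 = m + 1 by omega]
  have main := kbk_alg D T (fun f => kbkD_comm _ _ f) c h V E r
    (by
      ext p
      exact Complex.I_mul_I)
    (by
      ext p
      change (2 : ℂ) * (1 / 2) = 1
      norm_num)
    (Derivation.map_algebraMap _ _) (Derivation.map_algebraMap _ _)
    (Derivation.map_algebraMap _ _) (Derivation.map_algebraMap _ _) hTE hTV rfl h1 hrec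
  intro n hn x t
  obtain ⟨n, rfl⟩ : ∃ k, n = k + 1 := ⟨n - 1, by omega⟩
  have tr : deriv (fun s => ρ (n + 1) x s) t = (T (r (n + 1))).1 (x, t) :=
    kbk_dt (r (n + 1)) x t
  let J : ℕ → kbkSm := fun n => h * V * r (n + 1) - h * c * r (n + 2) + h * c * r n
  have hJ : (fun y => j (n + 1) y t) = fun y => (J n).1 (y, t) := by
    funext y
    match n with
    | 0 =>
      change j 1 y t = (1 / 2) * (v y t : ℂ) * ρ 1 y t - (1 / 2) * Complex.I * ρ 2 y t
        + (1 / 2) * Complex.I * (- (1 / 2) * Complex.I * (v y t : ℂ))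
      rw [hj1]
      linear_combination (1 / 4 * (v y t : ℂ)) * Complex.I_mul_I
    | m + 1 =>
      change j (m + 2) y t = (1 / 2) * (v y t : ℂ) * ρ (m + 2) y t
        - (1 / 2) * Complex.I * ρ (m + 2 + 1) y t + (1 / 2) * Complex.I * ρ (m + 1) y t
      rw [hjn (m + 2) (by omega), show m + 2 - 1 = m + 1 by omega]
      ring
  rw [hJ, kbk_dx (J n), tr, main n]
  change - (D (J n)).1 (x, t) + (D (J n)).1 (x, t) = 0
  ring
end
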